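/- Let R be either the semiring ℕ of natural numbers or the semiring F ∩ ℝ₊ of nonnegative elements of a subfield F of ℝ. Then every finitely generated projective R-module is free. -/

import Mathlib

/-!
The two families of semirings are treated uniformly. Each is additively cancellative, has no
zero divisors, has no nonzero additive units, and satisfies the following dichotomy: every
scalar `a` is either of the form `1 + c`, or can be completed to `1` by a unit `u`, that is
`a + u = 1`. (Over `ℕ` the second case is `a = 0`; over `F ∩ ℝ₊` it is `a < 1`.)

Choose a minimal finite generating set `S` of the projective module `P`, and let `s` be a section
of the surjection `p : R^S → P`. Then `P` embeds in `R^S`, so it inherits cancellation and has no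
nonzero additive units. For `x ∈ S`, write `x = p (s x) = a x + r`, where `a` is the `x`-coordinate
of `s x` and `r` lies in the span of `S \ {x}`.
If `a + u = 1` with `u` a unit, then cancelling `a x` gives `u x = r`, so `x` is redundant,
contradicting minimality. Hence `a = 1 + c`, and cancelling `x` gives `0 = c x + r`. All the terms
vanish, and elements of `S` are nonzero, so `s x` is the basis vector at `x`. Therefore `s ∘ p = id`
and `p` is an isomorphism.
-/

universe u

/-- The subsemiring `F ∩ ℝ₊` of nonnegative elements of a subfield `F` of `ℝ`. -/
def Subfield.nonnegSubsemiring (F : Subfield ℝ) : Subsemiring ℝ where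
  carrier := {x | x ∈ F ∧ 0 ≤ x}
  zero_mem' := ⟨zero_mem F, le_refl 0⟩
  one_mem' := ⟨one_mem F, zero_le_one⟩
  add_mem' := fun ha hb => ⟨add_mem ha.1 hb.1, add_nonneg ha.2 hb.2⟩
  mul_mem' := fun ha hb => ⟨mul_mem ha.1 hb.1, mul_nonneg ha.2 hb.2⟩

/-- Finitely generated projective modules are free over a cancellative semiring without zero
divisors and without nonzero additive units, in which every scalar is either `1 + c` or is
completed to `1` by a unit. -/
theorem free_of_dichotomy {R : Type*} {M : Type*} [CommSemiring R] [IsCancelAdd R]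
    [NoZeroDivisors R] (hz : ∀ a b : R, a + b = 0 → a = 0)
    (hd : ∀ a : R, (∃ c, a = 1 + c) ∨ ∃ u, IsUnit u ∧ a + u = 1)
    [AddCommMonoid M] [Module R M] (hfin : Module.Finite R M) (hproj : Module.Projective R M) :
    Module.Free R M := by
  classical
  obtain ⟨S, hS⟩ := exists_minimal_of_wellFoundedLT
    (fun S : Finset M => Submodule.span R (S : Set M) = ⊤) hfin.fg_top
  have hirr : ∀ x ∈ S, x ∉ Submodule.span R ((S.erase x : Finset M) : Set M) := by
    intro x hx hmem
    have h1 : Submodule.span R ((S.erase x : Finset M) : Set M) = ⊤ := by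
      rw [eq_top_iff, ← hS.prop, Submodule.span_le]
      intro y hy
      by_cases h : y = x
      · exact h ▸ hmem
      · exact Submodule.subset_span (by simpa [h] using hy)
    exact Finset.notMem_erase x S (hS.le_of_le h1 (Finset.erase_subset x S) hx)
  let p : (S →₀ R) →ₗ[R] M := Finsupp.linearCombination R (Subtype.val : S → M)
  have hp : Function.Surjective p := by
    rw [← LinearMap.range_eq_top, Finsupp.range_linearCombination]
    simpa using hS.prop
  obtain ⟨s, hs⟩ := Module.projective_lifting_property p LinearMap.id hp
  have hps : ∀ m, p (s m) = m := fun m => LinearMap.congr_fun hs m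
  have hsinj : Function.Injective s := Function.LeftInverse.injective hps
  have hcancel : ∀ a b c : M, a + b = a + c → b = c := fun a b c h =>
    hsinj (add_left_cancel (a := s a) (by rw [← map_add, ← map_add, h]))
  have hzM : ∀ a b : M, a + b = 0 → a = 0 := fun a b h => hsinj <| by
    rw [map_zero]
    ext i
    have := DFunLike.congr_fun (congrArg s h) i
    simp only [map_add, map_zero, Finsupp.add_apply] at this
    exact hz _ _ this
  have hsmul : ∀ (c : R) (m : M), m ≠ 0 → c • m = 0 → c = 0 := by
    intro c m hm h
    have h1 : s m ≠ 0 := fun h => hm (hsinj (by rw [h, map_zero]))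
    obtain ⟨i, hi⟩ := Finsupp.ne_iff.1 h1
    have := DFunLike.congr_fun (congrArg s h) i
    simp only [map_smul, map_zero, Finsupp.smul_apply, smul_eq_mul, Finsupp.coe_zero,
      Pi.zero_apply] at this hi
    exact (mul_eq_zero.1 this).resolve_right hi
  have hne : ∀ x ∈ S, x ≠ 0 := fun x hx h => hirr x hx (h ▸ Submodule.zero_mem _)
  have key : ∀ x : S, s x = Finsupp.single x 1 := by
    intro x
    have hsum : s x x • (x : M) + ∑ y ∈ Finset.univ.erase x, s x y • (y : M) = x := by
      rw [Finset.add_sum_erase _ (fun y : S => s x y • (y : M)) (Finset.mem_univ x)]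
      conv_rhs => rw [← hps x]
      rw [Finsupp.linearCombination_apply, Finsupp.sum_fintype _ _ (by simp)]
    have hr : ∑ y ∈ Finset.univ.erase x, s x y • (y : M) ∈
        Submodule.span R ((S.erase x : Finset M) : Set M) := by
      refine Submodule.sum_mem _ fun y hy => Submodule.smul_mem _ _ (Submodule.subset_span ?_)
      have hyx : (y : M) ≠ x := fun h => (Finset.mem_erase.1 hy).1 (Subtype.ext h)
      exact Finset.mem_coe.2 (Finset.mem_erase.2 ⟨hyx, y.2⟩)
    rcases hd (s x x) with ⟨c, hc⟩ | ⟨u, hu, hau⟩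
    · have h0 : c • (x : M) + ∑ y ∈ Finset.univ.erase x, s x y • (y : M) = 0 := by
        apply hcancel (x : M)
        rw [hc, add_smul, one_smul, add_assoc] at hsum
        rw [hsum, add_zero]
      have hc0 : c = 0 := hsmul c x (hne x x.2) (hzM _ _ h0)
      ext y
      by_cases hyx : y = x
      · subst hyx
        simp [hc, hc0]
      · rw [hc0, zero_smul, zero_add, ← Finset.add_sum_erase _ _
          (Finset.mem_erase.2 ⟨hyx, Finset.mem_univ y⟩)] at h0
        rw [Finsupp.single_eq_of_ne hyx]
        exact hsmul _ _ (hne y y.2) (hzM _ _ h0)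
    · exfalso
      apply hirr x x.2
      have h1 : u • (x : M) = ∑ y ∈ Finset.univ.erase x, s x y • (y : M) := by
        apply hcancel (s x x • (x : M))
        rw [hsum, ← add_smul, hau, one_smul]
      rw [← h1] at hr
      obtain ⟨v, rfl⟩ := hu
      have h2 := Submodule.smul_mem _ ((v⁻¹ : Rˣ) : R) hr
      rwa [smul_smul, Units.inv_mul, one_smul] at h2
  have hsp : s ∘ₗ p = LinearMap.id := by
    ext1 x
    ext1
    simp [p, key]
  exact Module.Free.of_equiv (LinearEquiv.ofLinearMap p s hs hsp)

/-- Every finitely generated projective module over `ℕ`, or over `F ∩ ℝ₊` for a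
subfield `F ⊆ ℝ`, is free. -/
theorem fg_projective_free_over_nat_and_nonneg_subfields :
    (∀ (M : Type u) [AddCommMonoid M],
        Module.Finite ℕ M → Module.Projective ℕ M → Module.Free ℕ M) ∧
    (∀ (F : Subfield ℝ) (M : Type u) [AddCommMonoid M]
        [Module (F.nonnegSubsemiring) M],
        Module.Finite (F.nonnegSubsemiring) M → Module.Projective (F.nonnegSubsemiring) M →
        Module.Free (F.nonnegSubsemiring) M) := by
  refine ⟨fun M _ hf hp => ?_, fun F M _ _ hf hp => ?_⟩
  · refine free_of_dichotomy (fun a b h => by omega) (fun a => ?_) hf hp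
    rcases a with _ | n
    · exact Or.inr ⟨1, isUnit_one, rfl⟩
    · exact Or.inl ⟨n, add_comm n 1⟩
  · have : IsCancelAdd F.nonnegSubsemiring :=
      Function.Injective.isCancelAdd Subtype.val Subtype.val_injective fun _ _ => rfl
    refine free_of_dichotomy (fun a b h => ?_) (fun a => ?_) hf hp
    · have h' : (a : ℝ) + b = 0 := congrArg Subtype.val h
      exact Subtype.ext ((add_eq_zero_iff_of_nonneg a.2.2 b.2.2).1 h').1
    · rcases le_or_gt 1 (a : ℝ) with h | h
      · refine Or.inl ⟨⟨a - 1, sub_mem a.2.1 (one_mem F), sub_nonneg.2 h⟩, Subtype.ext ?_⟩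
        exact (add_sub_cancel (1 : ℝ) a).symm
      · have hpos : 0 < 1 - (a : ℝ) := sub_pos.2 h
        have hF : 1 - (a : ℝ) ∈ F := sub_mem (one_mem F) a.2.1
        refine Or.inr ⟨⟨1 - a, hF, hpos.le⟩, ?_, Subtype.ext (add_sub_cancel (a : ℝ) 1)⟩
        exact IsUnit.of_mul_eq_one ⟨(1 - (a : ℝ))⁻¹, inv_mem hF, (inv_pos.2 hpos).le⟩
          (Subtype.ext (mul_inv_cancel₀ hpos.ne'))
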